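/- Let s, t >= 2 be integers and put l := lcm(s,t). The mix of G_s := [3,3,4,3]_{(s,s,0,0)} and G_t := [3,3,4,3]_{(t,t,0,0)} — i.e. the subgroup of G_s x G_t generated by the five pairs (pi'_s(a), pi'_t(a)), ..., (pi'_s(e), pi'_t(e)) — is isomorphic to [3,3,4,3]_{(l,l,0,0)}. -/

import Mathlib

/-- Coxeter matrix of the string diagram [3,3,4,3] on generators a,b,c,d,e = 0..4. -/
def cox5 : Fin 5 → Fin 5 → ℕ := fun i j =>
  if i = j then 1
  else if (i : ℕ) + 1 = (j : ℕ) ∨ (j : ℕ) + 1 = (i : ℕ) then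
    (if ((i : ℕ) = 2 ∧ (j : ℕ) = 3) ∨ ((i : ℕ) = 3 ∧ (j : ℕ) = 2) then 4 else 3)
  else 2

def rels5 : Set (FreeGroup (Fin 5)) :=
  Set.range fun p : Fin 5 × Fin 5 => (FreeGroup.of p.1 * FreeGroup.of p.2) ^ cox5 p.1 p.2

/-- The Coxeter group of type [3,3,4,3]. -/
abbrev W5 : Type := PresentedGroup rels5

def v (i : Fin 5) : W5 := PresentedGroup.of i

/-- sigma = d^(cb) = b*c*d*c*b. -/
def sg5 : W5 := v 1 * v 2 * v 3 * v 2 * v 1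
/-- tau = c^(de) = e*d*c*d*e. -/
def tu5 : W5 := v 4 * v 3 * v 2 * v 3 * v 4

/-- [3,3,4,3]_{(s,s,0,0)} : the quotient of [3,3,4,3] by the normal closure of (a σ τ)^{2s}. -/
abbrev Gq (s : ℕ) : Type := W5 ⧸ Subgroup.normalClosure ({(v 0 * sg5 * tu5) ^ (2 * s)} : Set W5)

/-- [3,3,4,3]_{(s,0,0,0)} : the quotient of [3,3,4,3] by the normal closure of (a σ τ σ)^s. -/
abbrev Hq (s : ℕ) : Type := W5 ⧸ Subgroup.normalClosure ({(v 0 * sg5 * tu5 * sg5) ^ s} : Set W5)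

/-- The quotient map W5 → [3,3,4,3]_{(s,s,0,0)}. -/
def piG (s : ℕ) : W5 →* Gq s := QuotientGroup.mk' _

/-- The quotient map W5 → [3,3,4,3]_{(s,0,0,0)}. -/
def piH (s : ℕ) : W5 →* Hq s := QuotientGroup.mk' _


/-! ### Word problem certificates -/

/-- The product in `W5` of a word in the generators. -/
def wp5 (l : List (Fin 5)) : W5 := (l.map v).prod

/-- Apply the cancellation or braid move available at the head of a word. -/
def headMove : List (Fin 5) → List (Fin 5)
  | x :: y :: r =>
    if x = y then r
    else if cox5 x y = 2 then y :: x :: r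
    else if cox5 x y = 3 then
      match r with
      | z :: r' => if z = x then y :: x :: y :: r' else x :: y :: z :: r'
      | [] => [x, y]
    else if cox5 x y = 4 then
      match r with
      | z :: w :: r' => if z = x ∧ w = y then y :: x :: y :: x :: r' else x :: y :: z :: w :: r'
      | r' => x :: y :: r'
    else x :: y :: r
  | l => l

def moveAt : ℕ → List (Fin 5) → List (Fin 5)
  | 0, l => headMove l
  | _ + 1, [] => []
  | p + 1, x :: l => x :: moveAt p l

def runMoves : List ℕ → List (Fin 5) → List (Fin 5)
  | [], l => l
  | p :: ps, l => runMoves ps (moveAt p l)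

lemma v_rel (i j : Fin 5) : (v i * v j) ^ cox5 i j = 1 := by
  have h : (FreeGroup.of i * FreeGroup.of j) ^ cox5 i j ∈ rels5 := ⟨(i, j), rfl⟩
  have := PresentedGroup.one_of_mem h
  simpa [v, PresentedGroup.of] using this

lemma v_sq (i : Fin 5) : v i * v i = 1 := by
  have := v_rel i i
  simpa [cox5] using this

lemma v_inv (i : Fin 5) : (v i)⁻¹ = v i := inv_eq_of_mul_eq_one_left (v_sq i)

lemma wp5_nil : wp5 [] = 1 := rfl

lemma wp5_cons (x : Fin 5) (l : List (Fin 5)) : wp5 (x :: l) = v x * wp5 l := by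
  simp [wp5]

lemma wp5_append (l m : List (Fin 5)) : wp5 (l ++ m) = wp5 l * wp5 m := by
  simp [wp5]

lemma wp5_reverse (l : List (Fin 5)) : wp5 l.reverse = (wp5 l)⁻¹ := by
  induction l with
  | nil => simp [wp5]
  | cons x l ih => simp [wp5_append, wp5_cons, ih, v_inv, wp5_nil]

lemma braid2 {x y : Fin 5} (h : cox5 x y = 2) : v x * v y = v y * v x := by
  have := v_rel x y
  rw [h, pow_two] at this
  have h2 := eq_inv_of_mul_eq_one_left this
  rw [h2, mul_inv_rev, v_inv, v_inv]

lemma braid3 {x y : Fin 5} (h : cox5 x y = 3) : v x * (v y * v x) = v y * (v x * v y) := by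
  have := v_rel x y
  rw [h] at this
  have h2 : (v x * (v y * v x)) * (v y * (v x * v y)) = 1 := by
    rw [← this]; simp only [pow_succ, pow_zero, one_mul, mul_assoc]
  rw [eq_inv_of_mul_eq_one_left h2]
  simp [v_inv, mul_assoc]

lemma braid4 {x y : Fin 5} (h : cox5 x y = 4) :
    v x * (v y * (v x * v y)) = v y * (v x * (v y * v x)) := by
  have := v_rel x y
  rw [h] at this
  have h2 : (v x * (v y * (v x * v y))) * (v x * (v y * (v x * v y))) = 1 := by
    rw [← this]; simp only [pow_succ, pow_zero, one_mul, mul_assoc]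
  rw [eq_inv_of_mul_eq_one_left h2]
  simp [v_inv, mul_assoc]

lemma wp5_headMove (l : List (Fin 5)) : wp5 (headMove l) = wp5 l := by
  unfold headMove
  split
  · rename_i x y r
    split_ifs with h1 h2 h3 h4
    · subst h1
      rw [wp5_cons, wp5_cons, ← mul_assoc, v_sq, one_mul]
    · simp only [wp5_cons, ← mul_assoc, braid2 h2]
    · split
      · split_ifs with h5
        · subst h5
          simp only [wp5_cons]
          have := congrArg (· * wp5 ‹_›) (braid3 h3)
          simpa only [mul_assoc] using this.symm
        · rfl
      · rfl
    · split
      · split_ifs with h5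
        · obtain ⟨rfl, rfl⟩ := h5
          simp only [wp5_cons]
          have := congrArg (· * wp5 ‹_›) (braid4 h4)
          simpa only [mul_assoc] using this.symm
        · rfl
      · rfl
    · rfl
  · rfl

lemma wp5_moveAt (p : ℕ) (l : List (Fin 5)) : wp5 (moveAt p l) = wp5 l := by
  induction p generalizing l with
  | zero => exact wp5_headMove l
  | succ p ih =>
    cases l with
    | nil => rfl
    | cons x l => simp [moveAt, wp5_cons, ih]

lemma wp5_runMoves (c : List ℕ) (l : List (Fin 5)) : wp5 (runMoves c l) = wp5 l := by
  induction c generalizing l with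
  | nil => rfl
  | cons p c ih => simp [runMoves, ih, wp5_moveAt]

lemma wp5_of_run {c : List ℕ} {l : List (Fin 5)} (h : runMoves c l = []) : wp5 l = 1 := by
  rw [← wp5_runMoves c l, h, wp5_nil]

/-! ### Four translations -/

/-- Words for four independent translations. -/
def tw : Fin 4 → List (Fin 5)
  | 0 => [1, 0, 2, 3, 2, 1, 4, 3, 2, 3, 4, 1, 2, 3, 2, 0]
  | 1 => [2, 1, 0, 3, 2, 1, 4, 3, 2, 3, 4, 1, 2, 3, 0, 1]
  | 2 => [3, 2, 1, 0, 3, 2, 1, 4, 3, 2, 3, 4, 1, 2, 0, 1]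
  | 3 => [1, 2, 3, 2, 1, 0, 1, 2, 3, 2, 1, 4, 3, 2, 3, 4]

/-- The word of a product of translations and their inverses. -/
def tword : List (Fin 4 × Bool) → List (Fin 5)
  | [] => []
  | (j, true) :: r => tw j ++ tword r
  | (j, false) :: r => (tw j).reverse ++ tword r

/-- The expression of the conjugate of the `i`-th translation by the `g`-th generator. -/
def cjExpr : Fin 4 → Fin 5 → List (Fin 4 × Bool)
  | 0, 0 => [(0, false), (1, false), (2, false), (3, true)]
  | 0, 1 => [(0, false)]
  | 0, 2 => [(0, true), (1, true)]
  | 0, 3 => [(0, true)]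
  | 0, 4 => [(0, true)]
  | 1, 0 => [(1, true)]
  | 1, 1 => [(0, true), (1, true)]
  | 1, 2 => [(1, false)]
  | 1, 3 => [(2, true)]
  | 1, 4 => [(1, true)]
  | 2, 0 => [(2, true)]
  | 2, 1 => [(0, true), (2, true)]
  | 2, 2 => [(2, true)]
  | 2, 3 => [(1, true)]
  | 2, 4 => [(3, false)]
  | 3, 0 => [(3, true)]
  | 3, 1 => [(0, false), (3, true)]
  | 3, 2 => [(3, true)]
  | 3, 3 => [(3, true)]
  | 3, 4 => [(2, false)]

def cjCert : Fin 4 → Fin 5 → List ℕ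
  | 0, 0 =>
    [16, 15, 11, 12, 13, 10, 6, 7, 8, 10, 13, 14, 17, 16, 12, 14, 15, 9, 5, 6, 9, 11, 12, 13,
    15, 10, 8, 4, 6, 7, 8, 10, 13, 14, 7, 8, 3, 4, 7, 8, 10, 11, 13, 12, 11, 12, 14, 10, 11, 9,
    2, 3, 4, 5, 6, 7, 9, 11, 14, 16, 13, 10, 11, 13, 16, 12, 9, 12, 14, 15, 14, 15, 13, 14, 8,
    9, 10, 11, 13, 10, 11, 6, 5, 6, 8, 9, 10, 11, 13, 12, 5, 6, 7, 9, 4, 2, 4, 7, 8, 9, 12, 14,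
    8, 9, 10, 11, 12, 6, 8, 5, 1, 2, 3, 5, 8, 10, 11, 12, 14, 15, 13, 15, 14, 12, 13, 9, 10, 13,
    12, 7, 8, 10, 11, 12, 14, 13, 7, 8, 9, 6, 2, 3, 4, 6, 9, 10, 13, 15, 8, 10, 7, 3, 4, 5, 7,
    10, 12, 13, 14, 11, 9, 4, 5, 1, 4, 5, 7, 8, 9, 11, 14, 15, 14, 13, 12, 11, 8, 9, 10, 9, 8,
    7, 6, 5, 4, 3, 2, 1, 0]
  | 0, 1 =>
    [0, 15, 14, 13, 12, 11, 10, 9, 8, 7, 6, 5, 4, 3, 2, 1, 0]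
  | 0, 2 =>
    [15, 16, 14, 15, 16, 17, 14, 12, 14, 15, 17, 11, 12, 13, 14, 15, 16, 8, 11, 12, 13, 6, 5, 6,
    8, 9, 11, 2, 3, 4, 0, 2, 3, 4, 6, 7, 8, 9, 11, 13, 16, 15, 14, 12, 13, 14, 16, 10, 11, 12,
    13, 8, 10, 11, 7, 5, 7, 10, 11, 13, 15, 16, 14, 15, 13, 14, 15, 14, 13, 12, 11, 10, 9, 8, 7,
    3, 4, 5, 6, 5, 4, 2, 3, 1, 2, 1, 0]
  | 0, 3 =>
    [0, 1, 2, 5, 6, 8, 9, 11, 12, 15, 16, 15, 14, 13, 12, 11, 10, 9, 8, 7, 6, 5, 4, 3, 2, 1, 0]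
  | 0, 4 =>
    [11, 12, 10, 6, 7, 8, 5, 0, 1, 2, 3, 5, 8, 9, 12, 14, 15, 16, 15, 14, 13, 11, 12, 7, 9, 10,
    11, 10, 9, 8, 6, 7, 4, 5, 6, 5, 4, 3, 2, 1, 0]
  | 1, 0 =>
    [0, 1, 3, 4, 6, 7, 10, 11, 13, 14, 16, 15, 14, 13, 12, 11, 10, 9, 8, 7, 6, 5, 4, 3, 2, 1, 0]
  | 1, 1 =>
    [16, 14, 15, 16, 17, 14, 12, 14, 15, 17, 11, 12, 13, 14, 15, 16, 8, 11, 12, 13, 6, 5, 6, 8,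
    9, 11, 3, 4, 2, 3, 4, 6, 7, 8, 9, 11, 13, 16, 15, 14, 12, 13, 14, 16, 10, 11, 12, 13, 8, 10,
    11, 7, 5, 7, 10, 11, 13, 15, 16, 14, 15, 13, 14, 15, 14, 13, 12, 11, 10, 9, 8, 7, 3, 4, 5,
    6, 5, 4, 2, 3, 1, 2, 1, 0]
  | 1, 2 =>
    [0, 15, 14, 13, 12, 11, 10, 9, 8, 7, 6, 5, 4, 3, 2, 1, 0]
  | 1, 3 =>
    [14, 15, 16, 15, 14, 13, 12, 11, 10, 9, 8, 7, 6, 5, 4, 3, 2, 1, 0]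
  | 1, 4 =>
    [11, 12, 10, 6, 7, 8, 5, 0, 1, 2, 3, 5, 8, 9, 12, 14, 15, 16, 15, 14, 13, 11, 12, 7, 9, 10,
    11, 10, 9, 8, 6, 7, 4, 5, 6, 5, 4, 3, 2, 1, 0]
  | 2, 0 =>
    [0, 1, 2, 4, 5, 7, 8, 11, 12, 14, 16, 15, 14, 13, 12, 11, 10, 9, 8, 7, 6, 5, 4, 3, 2, 1, 0]
  | 2, 1 =>
    [16, 15, 13, 15, 16, 18, 12, 13, 14, 15, 16, 17, 9, 12, 13, 14, 7, 6, 7, 9, 10, 12, 4, 5, 3,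
    4, 5, 7, 8, 9, 10, 12, 14, 17, 16, 15, 13, 14, 15, 17, 11, 12, 13, 14, 9, 11, 12, 8, 6, 8,
    11, 12, 14, 16, 17, 15, 16, 13, 4, 5, 6, 3, 2, 1, 2, 5, 6, 8, 9, 11, 12, 13, 16, 12, 13, 14,
    15, 14, 13, 12, 11, 10, 9, 8, 7, 6, 5, 4, 3, 2, 1, 0]
  | 2, 2 =>
    [14, 4, 5, 3, 0, 3, 5, 7, 8, 9, 10, 11, 12, 14, 16, 15, 13, 14, 13, 12, 11, 10, 9, 8, 7, 6,
    4, 5, 2, 3, 4, 3, 2, 1, 0]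
  | 2, 3 =>
    [0, 14, 15, 13, 14, 13, 12, 11, 10, 9, 8, 7, 6, 5, 4, 3, 2, 1, 0]
  | 2, 4 =>
    [12, 13, 14, 15, 16, 15, 13, 14, 11, 12, 13, 7, 8, 9, 11, 12, 4, 5, 6, 7, 8, 9, 11, 10, 9,
    8, 7, 5, 6, 3, 4, 5, 4, 3, 2, 1, 0]
  | 3, 0 =>
    [5, 7, 8, 9, 4, 5, 7, 3, 4, 2, 0, 2, 4, 7, 9, 11, 12, 13, 14, 15, 16, 15, 14, 13, 12, 11,
    10, 8, 9, 6, 7, 8, 3, 4, 6, 7, 1, 2, 3, 4, 6, 5, 4, 3, 2, 1, 0]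
  | 3, 1 =>
    [0, 14, 15, 13, 14, 9, 10, 11, 13, 12, 13, 14, 8, 9, 12, 13, 7, 9, 10, 12, 6, 7, 10, 11, 3,
    5, 6, 7, 8, 9, 10, 12, 15, 11, 12, 13, 14, 13, 12, 11, 10, 9, 8, 7, 6, 5, 4, 2, 3, 1, 2, 0,
    1, 0]
  | 3, 2 =>
    [0, 2, 3, 5, 6, 8, 9, 11, 12, 15, 16, 15, 14, 13, 12, 11, 10, 9, 8, 7, 6, 5, 4, 3, 2, 1, 0]
  | 3, 3 =>
    [0, 1, 4, 5, 6, 7, 10, 11, 13, 14, 16, 15, 14, 13, 12, 11, 10, 9, 8, 7, 6, 5, 4, 3, 2, 1, 0]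
  | 3, 4 =>
    [16, 15, 14, 11, 12, 13, 5, 7, 8, 9, 10, 11, 12, 11, 9, 10, 4, 5, 7, 8, 9, 8, 7, 6, 3, 4, 5,
    0, 1, 2, 3, 4, 3, 1, 2, 1, 0]

lemma cj_run : ∀ i g,
    runMoves (cjCert i g) ((g :: (tw i ++ [g])) ++ (tword (cjExpr i g)).reverse) = [] := by
  decide +kernel

/-- Certificates for commutation of the `i`-th and `j`-th translations, `j < i`. -/
def cmCert : Fin 4 → Fin 4 → List ℕ
  | 1, 0 =>
    [15, 14, 12, 15, 14, 10, 9, 10, 12, 13, 14, 16, 15, 9, 10, 11, 8, 6, 8, 11, 12, 15, 17, 10,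
    12, 9, 5, 6, 7, 9, 12, 14, 15, 16, 13, 11, 6, 7, 3, 6, 7, 9, 10, 11, 13, 16, 15, 14, 15, 16,
    17, 14, 10, 11, 12, 14, 15, 17, 11, 12, 13, 14, 15, 16, 8, 11, 12, 13, 6, 5, 6, 8, 9, 11, 2,
    3, 4, 0, 2, 3, 4, 6, 7, 8, 9, 11, 13, 16, 15, 14, 12, 13, 14, 16, 10, 11, 12, 13, 8, 10, 11,
    7, 5, 7, 10, 11, 13, 15, 16, 14, 15, 13, 14, 15, 14, 13, 12, 11, 10, 9, 8, 7, 3, 4, 5, 6, 5,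
    4, 2, 3, 1, 2, 1, 0]
  | 2, 0 =>
    [15, 14, 13, 11, 10, 11, 13, 14, 15, 10, 11, 12, 9, 7, 9, 12, 13, 16, 11, 13, 10, 6, 7, 8,
    10, 13, 15, 16, 14, 15, 12, 7, 8, 4, 7, 8, 10, 11, 12, 14, 15, 11, 12, 13, 15, 16, 18, 12,
    13, 14, 15, 16, 17, 9, 12, 13, 14, 7, 6, 7, 9, 10, 12, 3, 4, 5, 1, 3, 4, 5, 7, 8, 9, 10, 12,
    14, 17, 16, 15, 13, 14, 15, 17, 11, 12, 13, 14, 9, 11, 12, 8, 6, 8, 11, 12, 14, 16, 17, 15,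
    16, 13, 4, 5, 6, 3, 2, 0, 1, 2, 5, 6, 8, 9, 11, 12, 13, 16, 12, 13, 14, 15, 14, 13, 12, 11,
    10, 9, 8, 7, 6, 5, 4, 3, 2, 1, 0]
  | 2, 1 =>
    [13, 14, 16, 12, 14, 15, 17, 18, 16, 11, 12, 13, 14, 10, 11, 9, 6, 7, 3, 4, 5, 6, 7, 9, 11,
    14, 15, 18, 20, 21, 22, 17, 10, 6, 7, 4, 2, 3, 4, 6, 7, 10, 12, 13, 14, 15, 17, 20, 21, 12,
    14, 15, 11, 9, 3, 4, 5, 0, 3, 4, 5, 7, 8, 9, 11, 14, 15, 17, 18, 20, 21, 20, 19, 20, 21, 16,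
    19, 20, 14, 13, 14, 16, 17, 19, 10, 11, 13, 14, 17, 18, 12, 13, 11, 8, 9, 6, 9, 10, 13, 15,
    16, 17, 16, 15, 14, 12, 13, 8, 10, 11, 4, 5, 6, 3, 2, 3, 5, 6, 8, 9, 10, 11, 13, 15, 14, 15,
    12, 13, 14, 13, 12, 11, 10, 9, 8, 5, 6, 7, 2, 3, 4, 5, 6, 5, 3, 4, 1, 2, 3, 2, 1, 0]
  | 3, 0 =>
    [21, 22, 20, 15, 16, 17, 18, 14, 15, 10, 11, 12, 14, 15, 18, 19, 22, 24, 25, 26, 25, 21, 22,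
    25, 27, 28, 29, 24, 17, 19, 20, 21, 22, 24, 27, 28, 26, 27, 25, 26, 23, 24, 25, 23, 19, 21,
    14, 15, 16, 17, 13, 9, 10, 13, 15, 16, 17, 19, 20, 21, 23, 25, 20, 21, 18, 20, 16, 14, 15,
    12, 8, 10, 11, 12, 14, 15, 18, 19, 20, 23, 24, 14, 15, 16, 17, 11, 12, 7, 8, 11, 12, 14, 15,
    17, 18, 20, 21, 23, 22, 16, 18, 19, 20, 21, 15, 16, 18, 14, 15, 13, 4, 6, 7, 8, 9, 10, 11,
    13, 15, 18, 20, 19, 17, 18, 14, 15, 17, 16, 12, 13, 14, 15, 14, 13, 12, 11, 10, 9, 8, 7, 6,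
    5, 3, 4, 2, 3, 1, 2, 1, 0]
  | 3, 1 =>
    [15, 16, 17, 12, 15, 16, 17, 19, 20, 21, 20, 10, 9, 10, 12, 13, 15, 16, 17, 20, 22, 23, 24,
    19, 4, 6, 7, 8, 3, 4, 6, 7, 8, 10, 11, 12, 13, 15, 16, 17, 19, 22, 23, 14, 15, 16, 13, 14,
    12, 7, 8, 9, 10, 6, 7, 5, 3, 5, 7, 10, 11, 14, 16, 18, 19, 20, 21, 22, 23, 17, 15, 13, 14,
    6, 2, 3, 0, 2, 3, 6, 8, 9, 10, 11, 13, 14, 17, 19, 20, 21, 22, 19, 21, 20, 18, 19, 16, 17,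
    19, 16, 17, 18, 15, 8, 10, 11, 12, 13, 15, 18, 17, 12, 13, 14, 15, 11, 12, 7, 8, 11, 12, 14,
    15, 17, 16, 14, 13, 5, 6, 8, 9, 11, 12, 13, 16, 15, 15, 12, 13, 14, 13, 12, 11, 10, 9, 8, 7,
    6, 5, 4, 3, 2, 1, 0]
  | 3, 2 =>
    [14, 16, 17, 18, 13, 11, 13, 16, 17, 18, 20, 21, 22, 21, 10, 11, 7, 10, 11, 13, 14, 16, 17,
    18, 21, 23, 24, 25, 20, 4, 6, 7, 8, 9, 5, 3, 2, 1, 2, 5, 7, 8, 9, 11, 12, 13, 14, 16, 17,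
    18, 20, 23, 24, 15, 16, 17, 14, 15, 13, 8, 9, 10, 11, 7, 8, 6, 1, 2, 3, 4, 6, 8, 11, 12, 15,
    17, 19, 20, 21, 22, 23, 18, 16, 14, 15, 7, 3, 4, 0, 1, 3, 4, 7, 9, 10, 11, 12, 14, 15, 18,
    20, 21, 22, 21, 20, 19, 17, 18, 17, 18, 16, 17, 9, 11, 12, 13, 14, 16, 13, 14, 15, 12, 13,
    8, 9, 12, 13, 15, 17, 16, 14, 15, 6, 7, 9, 10, 12, 13, 14, 15, 13, 14, 13, 12, 11, 10, 9, 8,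
    7, 6, 5, 4, 3, 2, 1, 0]
  | _, _ => []

lemma cm_run : ∀ i j, j < i →
    runMoves (cmCert i j) (tw i ++ (tw j ++ ((tw i).reverse ++ (tw j).reverse))) = [] := by
  decide +kernel

def xxWord : List (Fin 5) := [0, 1, 2, 3, 2, 1, 4, 3, 2, 3, 4, 0, 1, 2, 3, 2, 1, 4, 3, 2, 3, 4]

def xxExpr : List (Fin 4 × Bool) := [(0, false), (0, false), (1, false), (2, false), (3, true), (3, true)]

def xxCert : List ℕ :=
    [21, 20, 19, 18, 17, 16, 15, 14, 13, 12, 11, 15, 16, 14, 10, 11, 12, 9, 5, 6, 7, 9, 12, 13,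
    16, 18, 19, 20, 15, 8, 4, 5, 8, 10, 11, 12, 13, 15, 18, 19, 10, 12, 13, 9, 7, 3, 5, 6, 7, 9,
    12, 13, 15, 16, 18, 6, 7, 2, 3, 6, 7, 9, 10, 12, 13, 16, 17, 11, 12, 10, 6, 7, 8, 5, 1, 2,
    3, 5, 8, 9, 12, 14, 15, 16, 21, 18, 21, 23, 22, 20, 21, 17, 18, 20, 21, 24, 23, 15, 14, 15,
    17, 18, 19, 13, 14, 11, 12, 7, 9, 10, 11, 12, 14, 17, 18, 19, 21, 22, 23, 25, 24, 11, 12,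
    13, 14, 15, 16, 18, 19, 20, 10, 11, 6, 7, 10, 11, 13, 14, 16, 17, 5, 7, 8, 10, 11, 14, 15,
    9, 10, 8, 4, 5, 6, 3, 1, 3, 6, 7, 10, 12, 13, 14, 15, 17, 20, 21, 24, 26, 27, 28, 30, 26,
    28, 29, 25, 26, 23, 24, 19, 21, 22, 14, 15, 16, 17, 13, 14, 9, 10, 13, 14, 16, 17, 19, 20,
    21, 22, 24, 26, 29, 28, 21, 22, 23, 24, 20, 21, 18, 20, 16, 15, 8, 10, 11, 13, 14, 15, 18,
    19, 20, 23, 24, 26, 27, 28, 30, 29, 23, 24, 25, 22, 12, 13, 14, 11, 12, 5, 7, 8, 9, 11, 6,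
    4, 2, 3, 4, 6, 9, 10, 11, 14, 16, 17, 18, 19, 20, 22, 25, 26, 29, 31, 24, 26, 23, 10, 11,
    12, 13, 14, 15, 16, 8, 10, 7, 3, 4, 5, 7, 10, 12, 13, 14, 16, 17, 19, 20, 21, 23, 26, 28,
    29, 30, 27, 25, 20, 21, 11, 9, 4, 5, 1, 4, 5, 7, 8, 9, 11, 14, 15, 16, 17, 20, 21, 23, 24,
    25, 27, 30, 31, 30, 29, 28, 27, 24, 25, 26, 25, 24, 23, 22, 21, 20, 19, 18, 17, 14, 16, 15,
    14, 13, 12, 11, 8, 9, 10, 9, 8, 7, 6, 5, 4, 3, 2, 1, 0]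

lemma xx_run : runMoves xxCert (xxWord ++ (tword xxExpr).reverse) = [] := by
  decide +kernel

def tr5 (i : Fin 4) : W5 := wp5 (tw i)

/-- The translation subgroup. -/
def L5 : Subgroup W5 := Subgroup.closure (Set.range tr5)

lemma tr5_mem (i : Fin 4) : tr5 i ∈ L5 := Subgroup.subset_closure ⟨i, rfl⟩

lemma tword_mem (e : List (Fin 4 × Bool)) : wp5 (tword e) ∈ L5 := by
  induction e with
  | nil => exact L5.one_mem
  | cons p r ih =>
    obtain ⟨j, b⟩ := p
    cases b
    · simp only [tword, wp5_append, wp5_reverse]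
      exact L5.mul_mem (L5.inv_mem (tr5_mem j)) ih
    · simp only [tword, wp5_append]
      exact L5.mul_mem (tr5_mem j) ih

lemma mem_of_run {c : List ℕ} {l : List (Fin 5)} {e : List (Fin 4 × Bool)}
    (h : runMoves c (l ++ (tword e).reverse) = []) : wp5 l ∈ L5 := by
  have h1 := wp5_of_run h
  rw [wp5_append, wp5_reverse] at h1
  rw [mul_inv_eq_one.mp h1]
  exact tword_mem e

lemma conj_mem (i : Fin 4) (g : Fin 5) : v g * tr5 i * (v g)⁻¹ ∈ L5 := by
  have := mem_of_run (cj_run i g)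
  rw [wp5_cons, wp5_append, wp5_cons, wp5_nil, mul_one] at this
  rw [v_inv, mul_assoc]
  exact this

lemma tr5_comm (i j : Fin 4) : tr5 i * tr5 j = tr5 j * tr5 i := by
  have key : ∀ i j, j < i → tr5 i * tr5 j = tr5 j * tr5 i := by
    intro i j h
    have := wp5_of_run (cm_run i j h)
    simp only [wp5_append, wp5_reverse] at this
    change tr5 i * (tr5 j * ((tr5 i)⁻¹ * (tr5 j)⁻¹)) = 1 at this
    rw [← mul_inv_rev, ← mul_assoc] at this
    exact mul_inv_eq_one.mp this
  rcases lt_trichotomy i j with h | h | h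
  · exact (key j i h).symm
  · rw [h]
  · exact key i j h

lemma closure_v : Subgroup.closure (Set.range v) = (⊤ : Subgroup W5) :=
  PresentedGroup.closure_range_of rels5

instance L5_normal : L5.Normal := by
  rw [← Subgroup.normalizer_eq_top_iff, eq_top_iff, ← closure_v, Subgroup.closure_le]
  have hg : ∀ g, ∀ x ∈ L5, v g * x * (v g)⁻¹ ∈ L5 := by
    intro g x hx
    have : L5 ≤ L5.comap (MulAut.conj (v g)).toMonoidHom := by
      refine (Subgroup.closure_le _).mpr ?_
      rintro _ ⟨i, rfl⟩
      simpa using conj_mem i g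
    simpa using this hx
  rintro _ ⟨g, rfl⟩
  refine Subgroup.mem_normalizer_iff.mpr fun x => ⟨hg g x, fun hx => ?_⟩
  have := hg g _ hx
  rw [v_inv] at this
  simpa [← mul_assoc, v_sq, mul_assoc _ (v g) (v g)] using this

lemma L5_comm {x y : W5} (hx : x ∈ L5) (hy : y ∈ L5) : x * y = y * x := by
  have h1 : ∀ i, ∀ y ∈ L5, Commute (tr5 i) y := by
    intro i y hy
    have : L5 ≤ Subgroup.centralizer {tr5 i} := by
      refine (Subgroup.closure_le _).mpr ?_
      rintro _ ⟨j, rfl⟩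
      exact Subgroup.mem_centralizer_singleton_iff.mpr (tr5_comm _ _)
    exact (Subgroup.mem_centralizer_singleton_iff.mp (this hy)).symm
  have : L5 ≤ Subgroup.centralizer {y} := by
    refine (Subgroup.closure_le _).mpr ?_
    rintro _ ⟨j, rfl⟩
    exact Subgroup.mem_centralizer_singleton_iff.mpr (h1 j y hy)
  exact Subgroup.mem_centralizer_singleton_iff.mp (this hx)

lemma L5_form {x : W5} (hx : x ∈ L5) : ∃ a b c d : ℤ,
    x = tr5 0 ^ a * tr5 1 ^ b * tr5 2 ^ c * tr5 3 ^ d := by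
  have hm : ∀ i, ∀ n : ℤ, tr5 i ^ n ∈ L5 := fun i n => L5.zpow_mem (tr5_mem i) n
  have cm : ∀ i j, ∀ m n : ℤ, Commute (tr5 i ^ m) (tr5 j ^ n) :=
    fun i j m n => L5_comm (hm i m) (hm j n)
  induction hx using Subgroup.closure_induction with
  | mem y hy =>
    obtain ⟨i, rfl⟩ := hy
    fin_cases i
    · exact ⟨1, 0, 0, 0, by simp⟩
    · exact ⟨0, 1, 0, 0, by simp⟩
    · exact ⟨0, 0, 1, 0, by simp⟩
    · exact ⟨0, 0, 0, 1, by simp⟩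
  | one => exact ⟨0, 0, 0, 0, by simp⟩
  | mul p q _ _ ihp ihq =>
    obtain ⟨a, b, c, d, rfl⟩ := ihp
    obtain ⟨a', b', c', d', rfl⟩ := ihq
    refine ⟨a + a', b + b', c + c', d + d', ?_⟩
    have e1 : Commute (tr5 1 ^ b) (tr5 0 ^ a') := cm _ _ _ _
    have e2 : Commute (tr5 2 ^ c) (tr5 0 ^ a' * tr5 1 ^ b') :=
      (cm _ _ _ _).mul_right (cm _ _ _ _)
    have e3 : Commute (tr5 3 ^ d) (tr5 0 ^ a' * tr5 1 ^ b' * tr5 2 ^ c') :=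
      ((cm _ _ _ _).mul_right (cm _ _ _ _)).mul_right (cm _ _ _ _)
    rw [zpow_add, zpow_add, zpow_add, zpow_add, e3.mul_mul_mul_comm, e2.mul_mul_mul_comm,
      e1.mul_mul_mul_comm]
  | inv p _ ih =>
    obtain ⟨a, b, c, d, rfl⟩ := ih
    refine ⟨-a, -b, -c, -d, ?_⟩
    have e1 : Commute (tr5 0 ^ a) (tr5 1 ^ b) := cm _ _ _ _
    have e2 : Commute (tr5 0 ^ a * tr5 1 ^ b) (tr5 2 ^ c) :=
      (cm _ _ _ _).mul_left (cm _ _ _ _)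
    have e3 : Commute (tr5 0 ^ a * tr5 1 ^ b * tr5 2 ^ c) (tr5 3 ^ d) :=
      ((cm _ _ _ _).mul_left (cm _ _ _ _)).mul_left (cm _ _ _ _)
    rw [e3.mul_inv, e2.mul_inv, e1.mul_inv]
    simp only [zpow_neg]

/-! ### An affine representation, for torsion-freeness -/

abbrev Z5 : Type := ℤ × ℤ × ℤ × ℤ × ℤ

def rfun : Fin 5 → Z5 → Z5
  | 0, (p, q, r, s, t) => (-p, q + p, r, s, t)
  | 1, (p, q, r, s, t) => (p + q, -q, r + q, s, t)
  | 2, (p, q, r, s, t) => (p, q + r, -r, s + r, t)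
  | 3, (p, q, r, s, t) => (p, q, r + 2 * s, -s, t + s)
  | 4, (p, q, r, s, t) => (p, q, r, s + t, -t)

lemma rfun_rfun (i : Fin 5) (x : Z5) : rfun i (rfun i x) = x := by
  obtain ⟨p, q, r, s, t⟩ := x
  fin_cases i <;> simp [rfun]

def rperm (i : Fin 5) : Equiv.Perm Z5 := ⟨rfun i, rfun i, rfun_rfun i, rfun_rfun i⟩

lemma rperm_rel (i j : Fin 5) : (rperm i * rperm j) ^ cox5 i j = 1 := by
  ext1 x
  obtain ⟨p, q, r, s, t⟩ := x
  fin_cases i <;> fin_cases j <;>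
    simp [cox5, pow_succ, rperm, rfun] <;> (try refine ⟨?_, ?_⟩) <;> ring_nf <;> simp

def rho : W5 →* Equiv.Perm Z5 :=
  PresentedGroup.toGroup (f := rperm) (by
    rintro _ ⟨⟨i, j⟩, rfl⟩
    simpa using rperm_rel i j)

lemma rho_v (i : Fin 5) (x : Z5) : rho (v i) x = rfun i x := by
  simp [rho, v, rperm]

lemma rho_wp (l : List (Fin 5)) (x : Z5) : rho (wp5 l) x = l.foldr rfun x := by
  induction l with
  | nil => simp [wp5_nil]
  | cons y l ih => simp [wp5_cons, ih, rho_v]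

/-- The level of a point. -/
def lev : Z5 → ℤ
  | (p, q, r, s, t) => p + 2 * q + 3 * r + 4 * s + 2 * t

def rw5 : Fin 4 → Z5
  | 0 => (-1, 2, -1, 0, 0)
  | 1 => (0, -1, 2, -1, 0)
  | 2 => (0, -1, 0, 1, -1)
  | 3 => (0, 1, 0, 0, -1)

lemma rho_tr (i : Fin 4) (x : Z5) : rho (tr5 i) x = x - lev x • rw5 i := by
  rw [tr5, rho_wp]
  obtain ⟨p, q, r, s, t⟩ := x
  fin_cases i <;> simp [tw, rfun, lev, rw5] <;> (try refine ⟨?_, ?_⟩) <;> ring_nf <;> simp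

lemma lev_rw (i : Fin 4) : lev (rw5 i) = 0 := by
  fin_cases i <;> rfl


lemma lev_shift (x : Z5) (n : ℤ) (u : Z5) (hu : lev u = 0) : lev (x - n • u) = lev x := by
  obtain ⟨p, q, r, s, t⟩ := x
  obtain ⟨a, b, c, d, e⟩ := u
  simp only [lev, Prod.smul_mk, Prod.mk_sub_mk, smul_eq_mul] at *
  linear_combination (-n) * hu

lemma rho_tr_inv (i : Fin 4) (x : Z5) : rho (tr5 i)⁻¹ x = x + lev x • rw5 i := by
  rw [map_inv, Equiv.Perm.inv_eq_iff_eq, rho_tr]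
  have : lev (x + lev x • rw5 i) = lev x := by
    have := lev_shift x (-lev x) (rw5 i) (lev_rw i)
    simpa using this
  rw [this]; simp

lemma rho_tr_zpow (i : Fin 4) (n : ℤ) (x : Z5) :
    rho (tr5 i ^ n) x = x - (n * lev x) • rw5 i := by
  induction n generalizing x with
  | zero => simp
  | succ n ih =>
    rw [zpow_add_one, map_mul, Equiv.Perm.mul_apply, ih, rho_tr, lev_shift _ _ _ (lev_rw i)]
    module
  | pred n ih =>
    have : lev (x + lev x • rw5 i) = lev x := by
      have := lev_shift x (-lev x) (rw5 i) (lev_rw i)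
      simpa using this
    rw [zpow_sub_one, map_mul, Equiv.Perm.mul_apply, ih, rho_tr_inv, this]
    module

lemma L5_torsion {x : W5} (hx : x ∈ L5) {n : ℕ} (hn : n ≠ 0) (h : x ^ n = 1) : x = 1 := by
  obtain ⟨a, b, c, d, rfl⟩ := L5_form hx
  set x := tr5 0 ^ a * tr5 1 ^ b * tr5 2 ^ c * tr5 3 ^ d with hxdef
  set u : Z5 := (-a, 2 * a - b - c + d, -a + 2 * b, -b + c, -c - d) with hu
  have hlu : lev u = 0 := by simp only [hu, lev]; ring
  have h1 : ∀ y, rho x y = y - lev y • u := by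
    intro y
    simp only [hxdef, map_mul, Equiv.Perm.mul_apply]
    rw [rho_tr_zpow 3, rho_tr_zpow 2, rho_tr_zpow 1, rho_tr_zpow 0]
    simp only [lev_shift _ _ _ (lev_rw _)]
    obtain ⟨p, q, r, s, t⟩ := y
    simp only [hu, rw5, Prod.smul_mk, Prod.mk_sub_mk, smul_eq_mul, Prod.mk.injEq]
    refine ⟨?_, ?_, ?_, ?_, ?_⟩ <;> ring
  have h2 : ∀ m : ℕ, ∀ y, rho (x ^ m) y = y - ((m : ℤ) * lev y) • u := by
    intro m
    induction m with
    | zero => simp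
    | succ m ih =>
      intro y
      rw [pow_succ, map_mul, Equiv.Perm.mul_apply, ih, h1, lev_shift _ _ _ hlu]
      push_cast
      module
  have h3 := h2 n (1, 0, 0, 0, 0)
  rw [h] at h3
  have hn' : (n : ℤ) ≠ 0 := by exact_mod_cast hn
  simp [hu, lev] at h3
  have ha : a = 0 := by omega
  have hb : b = 0 := by omega
  have hc : c = 0 := by omega
  have hd : d = 0 := by omega
  simp [hxdef, ha, hb, hc, hd]

/-! ### The normal closures -/

/-- The square of the relator base. -/
def zz : W5 := (v 0 * sg5 * tu5) ^ 2

def K5 : Subgroup W5 := Subgroup.normalClosure {zz}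

instance K5_normal : K5.Normal := Subgroup.normalClosure_normal

lemma zz_mem : zz ∈ L5 := by
  have := mem_of_run xx_run
  have h : zz = wp5 xxWord := by
    simp [zz, xxWord, wp5, sg5, tu5, pow_two, mul_assoc]
  rwa [h]

lemma K5_le : K5 ≤ L5 := Subgroup.normalClosure_le_normal (by simpa using zz_mem)

lemma K5_comm {x y : W5} (hx : x ∈ K5) (hy : y ∈ K5) : Commute x y :=
  L5_comm (K5_le hx) (K5_le hy)

/-- The subgroup of `s`-th powers of elements of `K5`. -/
def P5 (s : ℕ) : Subgroup W5 where
  carrier := {g | ∃ n ∈ K5, n ^ s = g}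
  one_mem' := ⟨1, K5.one_mem, one_pow s⟩
  mul_mem' := by
    rintro _ _ ⟨m, hm, rfl⟩ ⟨n, hn, rfl⟩
    exact ⟨m * n, K5.mul_mem hm hn, (K5_comm hm hn).mul_pow s⟩
  inv_mem' := by
    rintro _ ⟨m, hm, rfl⟩
    exact ⟨m⁻¹, K5.inv_mem hm, inv_pow m s⟩

instance P5_normal (s : ℕ) : (P5 s).Normal := by
  constructor
  rintro _ ⟨m, hm, rfl⟩ g
  exact ⟨g * m * g⁻¹, K5_normal.conj_mem m hm g, conj_pow⟩

lemma normalClosure_eq (s : ℕ) :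
    Subgroup.normalClosure ({(v 0 * sg5 * tu5) ^ (2 * s)} : Set W5) = P5 s := by
  have hz : (v 0 * sg5 * tu5) ^ (2 * s) = zz ^ s := by rw [zz, pow_mul]
  rw [hz]
  apply le_antisymm
  · refine Subgroup.normalClosure_le_normal ?_
    rintro _ rfl
    exact ⟨zz, Subgroup.subset_normalClosure rfl, rfl⟩
  · rintro _ ⟨n, hn, rfl⟩
    set N := Subgroup.normalClosure ({zz ^ s} : Set W5) with hN
    have hNn : N.Normal := Subgroup.normalClosure_normal
    have hc : ∀ c ∈ Group.conjugatesOfSet ({zz} : Set W5), c ^ s ∈ N := by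
      intro c hc
      rw [Group.mem_conjugatesOfSet_iff] at hc
      obtain ⟨a, rfl, hac⟩ := hc
      obtain ⟨g, rfl⟩ := isConj_iff.mp hac
      rw [conj_pow]
      exact hNn.conj_mem _ (Subgroup.subset_normalClosure rfl) g
    have hn' : n ∈ Subgroup.closure (Group.conjugatesOfSet ({zz} : Set W5)) := hn
    clear hn
    induction hn' using Subgroup.closure_induction with
    | mem y hy => exact hc y hy
    | one => rw [one_pow]; exact N.one_mem
    | mul a b ha hb iha ihb =>
      have : Commute a b := K5_comm ha hb
      rw [this.mul_pow]
      exact N.mul_mem iha ihb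
    | inv a _ ih => rw [inv_pow]; exact N.inv_mem ih

lemma P5_inf (s t : ℕ) (hs : s ≠ 0) : P5 s ⊓ P5 t = P5 (Nat.lcm s t) := by
  apply le_antisymm
  · rintro g ⟨⟨m, hm, rfl⟩, ⟨n, hn, hmn⟩⟩
    have hd : Nat.gcd s t ≠ 0 := Nat.gcd_ne_zero_left hs
    obtain ⟨d, p, q, hdpos, hcop, hsd, htd⟩ : ∃ d p q, d ≠ 0 ∧ Nat.Coprime p q ∧
        s = p * d ∧ t = q * d :=
      ⟨Nat.gcd s t, s / Nat.gcd s t, t / Nat.gcd s t, hd,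
        Nat.coprime_div_gcd_div_gcd (Nat.pos_of_ne_zero hd),
        (Nat.div_mul_cancel (Nat.gcd_dvd_left s t)).symm,
        (Nat.div_mul_cancel (Nat.gcd_dvd_right s t)).symm⟩
    have hl : Nat.lcm s t = q * s := by
      rw [hsd, htd, Nat.lcm_mul_right, hcop.lcm_eq_mul]; ring
    have hcm : Commute m n := K5_comm hm hn
    have hpq : m ^ p = n ^ q := by
      have h1 : (m ^ p * (n ^ q)⁻¹) ^ d = 1 := by
        rw [((hcm.pow_pow p q).inv_right).mul_pow, inv_pow, ← pow_mul, ← pow_mul, ← hsd, ← htd,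
          hmn, mul_inv_cancel]
      have h2 : m ^ p * (n ^ q)⁻¹ ∈ L5 :=
        K5_le (K5.mul_mem (K5.pow_mem hm p) (K5.inv_mem (K5.pow_mem hn q)))
      exact mul_inv_eq_one.mp (L5_torsion h2 hdpos h1)
    have hbez : (p : ℤ) * Nat.gcdA p q + q * Nat.gcdB p q = 1 := by
      have := Nat.gcd_eq_gcd_ab p q
      rw [hcop.gcd_eq_one] at this
      exact_mod_cast this.symm
    set α := Nat.gcdA p q
    set β := Nat.gcdB p q
    refine ⟨n ^ α * m ^ β, K5.mul_mem (K5.zpow_mem hn _) (K5.zpow_mem hm _), ?_⟩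
    have hr : (n ^ α * m ^ β) ^ q = m := by
      have e1 : (n ^ α) ^ q = m ^ ((p : ℤ) * α) := by
        rw [zpow_mul, zpow_natCast, hpq, ← zpow_natCast, ← zpow_natCast, ← zpow_mul, ← zpow_mul,
          mul_comm]
      have e2 : (m ^ β) ^ q = m ^ ((q : ℤ) * β) := by
        rw [← zpow_natCast, ← zpow_mul, mul_comm]
      rw [((hcm.symm.zpow_zpow α β)).mul_pow, e1, e2, ← zpow_add, hbez, zpow_one]
    rw [hl, pow_mul, hr]
  · rintro g ⟨m, hm, rfl⟩
    refine ⟨?_, ?_⟩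
    · obtain ⟨k, hk⟩ := Nat.dvd_lcm_left s t
      exact ⟨m ^ k, K5.pow_mem hm k, by rw [hk, ← pow_mul, mul_comm]⟩
    · obtain ⟨k, hk⟩ := Nat.dvd_lcm_right s t
      exact ⟨m ^ k, K5.pow_mem hm k, by rw [hk, ← pow_mul, mul_comm]⟩

/-- The mix of [3,3,4,3]_{(s,s,0,0)} and [3,3,4,3]_{(t,t,0,0)} is
[3,3,4,3]_{(l,l,0,0)} where l = lcm(s,t). -/
theorem stmt_16 (s t : ℕ) (hs : 2 ≤ s) (ht : 2 ≤ t) :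
    Nonempty
      ((Subgroup.closure
          (Set.range fun i : Fin 5 => ((piG s (v i), piG t (v i)) : Gq s × Gq t))) ≃*
        Gq (Nat.lcm s t)) := by
  set Φ : W5 →* Gq s × Gq t := (piG s).prod (piG t) with hΦ
  have hrange : Subgroup.closure
      (Set.range fun i : Fin 5 => ((piG s (v i), piG t (v i)) : Gq s × Gq t)) = Φ.range := by
    rw [MonoidHom.range_eq_map, ← closure_v, MonoidHom.map_closure, ← Set.range_comp]
    rfl
  have hker : Φ.ker =
      Subgroup.normalClosure ({(v 0 * sg5 * tu5) ^ (2 * Nat.lcm s t)} : Set W5) := by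
    have h1 := P5_inf s t (by omega)
    rw [← normalClosure_eq, ← normalClosure_eq, ← normalClosure_eq] at h1
    rw [← h1, hΦ, MonoidHom.ker_prod, piG, piG, QuotientGroup.ker_mk', QuotientGroup.ker_mk']
  exact ⟨(MulEquiv.subgroupCongr hrange).trans
    ((QuotientGroup.quotientKerEquivRange Φ).symm.trans
      (QuotientGroup.quotientMulEquivOfEq hker))⟩
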